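/- The assignment x ↦ y, y ↦ x⁻¹ extends to a group automorphism φ of S, and φ has order 4 in the automorphism group of S. Moreover, the element ν = x + x⁻¹ + y + y⁻¹ + xy + x⁻¹y⁻¹ + yx⁻¹ + y² + y⁻¹x + y⁻² + x²y + xy⁻¹x + xy⁻² + x⁻²y⁻¹ + x⁻¹yx⁻¹ + x⁻¹y² + yxy + y⁻¹x⁻¹y⁻¹ + x²y⁻¹x + xyx² + x⁻²yx⁻¹ + x⁻¹y⁻¹x⁻² + yx⁻²y⁻¹ + y⁻¹x²y + x²yx² + xy⁻¹x²y + x⁻²y⁻¹x⁻² + x⁻¹yx⁻²y⁻¹ + x²y⁻¹x²y of the group ring F₂[S] is a unit whose inverse is φ(ν)*, where φ also denotes the induced ring automorphism of F₂[S] and * : F₂[S] → F₂[S] is the F₂-linear anti-involution extending g ↦ g⁻¹; in particular ν is a unit of F₂[S] that is not a trivial unit. -/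

import Mathlib

noncomputable section

/-- The two relators of the Soelberg group `S = ⟨x, y | (xy)²(xy⁻¹)², (yx)²(yx⁻¹)²⟩`. -/
def Srels : Set (FreeGroup (Fin 2)) :=
  {(FreeGroup.of 0 * FreeGroup.of 1) ^ 2 * (FreeGroup.of 0 * (FreeGroup.of 1)⁻¹) ^ 2,
   (FreeGroup.of 1 * FreeGroup.of 0) ^ 2 * (FreeGroup.of 1 * (FreeGroup.of 0)⁻¹) ^ 2}

/-- The Soelberg group. -/
abbrev S : Type := PresentedGroup Srels

def sx : S := PresentedGroup.of 0
def sy : S := PresentedGroup.of 1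

/-- The image of a group element in the group ring `F₂[S]`. -/
def Gs (g : S) : MonoidAlgebra (ZMod 2) S := MonoidAlgebra.of (ZMod 2) S g

/-- The 29-term element `ν` of `F₂[S]`. -/
def ν : MonoidAlgebra (ZMod 2) S :=
  Gs sx + Gs sx⁻¹ + Gs sy + Gs sy⁻¹ + Gs (sx * sy) + Gs (sx⁻¹ * sy⁻¹) + Gs (sy * sx⁻¹)
    + Gs (sy ^ 2) + Gs (sy⁻¹ * sx) + Gs (sy⁻¹ ^ 2)
    + Gs (sx ^ 2 * sy) + Gs (sx * sy⁻¹ * sx) + Gs (sx * sy⁻¹ ^ 2) + Gs (sx⁻¹ ^ 2 * sy⁻¹)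
    + Gs (sx⁻¹ * sy * sx⁻¹) + Gs (sx⁻¹ * sy ^ 2) + Gs (sy * sx * sy) + Gs (sy⁻¹ * sx⁻¹ * sy⁻¹)
    + Gs (sx ^ 2 * sy⁻¹ * sx) + Gs (sx * sy * sx ^ 2) + Gs (sx⁻¹ ^ 2 * sy * sx⁻¹)
    + Gs (sx⁻¹ * sy⁻¹ * sx⁻¹ ^ 2) + Gs (sy * sx⁻¹ ^ 2 * sy⁻¹) + Gs (sy⁻¹ * sx ^ 2 * sy)
    + Gs (sx ^ 2 * sy * sx ^ 2) + Gs (sx * sy⁻¹ * sx ^ 2 * sy) + Gs (sx⁻¹ ^ 2 * sy⁻¹ * sx⁻¹ ^ 2)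
    + Gs (sx⁻¹ * sy * sx⁻¹ ^ 2 * sy⁻¹) + Gs (sx ^ 2 * sy⁻¹ * sx ^ 2 * sy)

/-! ### The group `S`: relations and normal form `t ^ k * x ^ p * y ^ q` with `t = (y x)²` -/

/-- The normal element `t = (yx)²`. -/
def st : S := (sy * sx) ^ 2

theorem rel_one : (sx * sy) ^ 2 * (sx * sy⁻¹) ^ 2 = 1 := by
  have h : PresentedGroup.mk Srels
      ((FreeGroup.of 0 * FreeGroup.of 1) ^ 2 * (FreeGroup.of 0 * (FreeGroup.of 1)⁻¹) ^ 2) = 1 :=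
    PresentedGroup.one_of_mem (by simp [Srels])
  simp only [map_mul, map_pow, map_inv] at h
  exact h

theorem rel_two : (sy * sx) ^ 2 * (sy * sx⁻¹) ^ 2 = 1 := by
  have h : PresentedGroup.mk Srels
      ((FreeGroup.of 1 * FreeGroup.of 0) ^ 2 * (FreeGroup.of 1 * (FreeGroup.of 0)⁻¹) ^ 2) = 1 :=
    PresentedGroup.one_of_mem (by simp [Srels])
  simp only [map_mul, map_pow, map_inv] at h
  exact h

theorem st_eq : st = (sx * sy⁻¹) ^ 2 := by
  have h := rel_two
  rw [mul_eq_one_iff_eq_inv] at h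
  rw [st, h, ← inv_pow]
  simp

theorem st_inv_eq : st⁻¹ = (sx * sy) ^ 2 := by
  have h := rel_one
  rw [mul_eq_one_iff_eq_inv, ← st_eq] at h
  exact h.symm

theorem conj_x_st : sx * st * sx⁻¹ = st⁻¹ := by
  rw [st_inv_eq, st]
  simp [pow_two, mul_assoc]

theorem conj_y_st : sy * st * sy⁻¹ = st⁻¹ := by
  have h : sy * st⁻¹ * sy⁻¹ = st := by
    rw [st_inv_eq, st]
    simp [pow_two, mul_assoc]
  rw [← inv_inj, inv_inv]
  conv_rhs => rw [← h]
  group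

theorem x_st_zpow (k : ℤ) : sx * st ^ k = st ^ (-k) * sx := by
  have h : sx * st ^ k * sx⁻¹ = st ^ (-k) := by
    rw [← conj_zpow, conj_x_st, inv_zpow']
  rw [← h]
  group

theorem y_st_zpow (k : ℤ) : sy * st ^ k = st ^ (-k) * sy := by
  have h : sy * st ^ k * sy⁻¹ = st ^ (-k) := by
    rw [← conj_zpow, conj_y_st, inv_zpow']
  rw [← h]
  group

theorem comm_x_sq : Commute st (sx ^ 2) := by
  have h1 : sx * st = st⁻¹ * sx := by simpa using x_st_zpow 1
  have h2 : sx * st⁻¹ = st * sx := by simpa using x_st_zpow (-1)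
  show st * sx ^ 2 = sx ^ 2 * st
  rw [pow_two, mul_assoc, h1, ← mul_assoc sx, h2, mul_assoc]

theorem y_mul_x : sy * sx = st * sx⁻¹ * sy⁻¹ := by
  rw [st]
  simp [pow_two, mul_assoc]

/-- `y x² y⁻¹ = x⁻² t²`. -/
theorem conj_y_x_sq : sy * sx ^ 2 * sy⁻¹ = st ^ 2 * (sx ^ 2)⁻¹ := by
  have h1 : sx * sy⁻¹ * sx = st * sy := by
    rw [st_eq]
    simp [pow_two, mul_assoc]
  have h2 : sx * sy * sx = st⁻¹ * sy⁻¹ := by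
    rw [st_inv_eq]
    simp [pow_two, mul_assoc]
  have hy := y_st_zpow
  -- from h1: x y⁻¹ x⁻¹ = t y x⁻², from h2: x y x⁻¹ = t⁻¹ y⁻¹ x⁻²
  have h3 : (st * sy * (sx ^ 2)⁻¹) * (st⁻¹ * sy⁻¹ * (sx ^ 2)⁻¹) = 1 := by
    rw [← h1, ← h2]
    group
  have h4 : sy * (sx ^ 2)⁻¹ * sy⁻¹ * st * st * (sx ^ 2)⁻¹ = 1 := by
    have e1 : (sx ^ 2)⁻¹ * st⁻¹ = st⁻¹ * (sx ^ 2)⁻¹ := (comm_x_sq.inv_inv.eq).symm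
    have e2 : sy * st⁻¹ = st * sy := by simpa using hy (-1)
    have e3 : (sx ^ 2)⁻¹ * st = st * (sx ^ 2)⁻¹ := (comm_x_sq.inv_right.eq).symm
    have e4 : sy * st = st⁻¹ * sy := by simpa using hy 1
    have e5 : sy⁻¹ * st = st⁻¹ * sy⁻¹ := by
      rw [inv_mul_eq_iff_eq_mul, ← mul_assoc, e2]; group
    have e6 : sy⁻¹ * st⁻¹ = st * sy⁻¹ := by
      rw [inv_mul_eq_iff_eq_mul, ← mul_assoc, e4]; group
    calc sy * (sx ^ 2)⁻¹ * sy⁻¹ * st * st * (sx ^ 2)⁻¹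
        = sy * (sx ^ 2)⁻¹ * (sy⁻¹ * st) * st * (sx ^ 2)⁻¹ := by group
      _ = sy * (sx ^ 2)⁻¹ * (st⁻¹ * sy⁻¹) * st * (sx ^ 2)⁻¹ := by rw [e5]
      _ = sy * ((sx ^ 2)⁻¹ * st⁻¹) * (sy⁻¹ * st) * (sx ^ 2)⁻¹ := by group
      _ = (sy * st⁻¹) * (sx ^ 2)⁻¹ * (sy⁻¹ * st) * (sx ^ 2)⁻¹ := by rw [e1]; group
      _ = (st * sy * (sx ^ 2)⁻¹) * (st⁻¹ * sy⁻¹ * (sx ^ 2)⁻¹) := by rw [e2, e5]; group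
      _ = 1 := h3
  have h5 : (sy * sx ^ 2 * sy⁻¹)⁻¹ * (st ^ 2 * (sx ^ 2)⁻¹) = 1 := by
    rw [← h4]
    simp [pow_two, mul_assoc]
  exact (inv_mul_eq_one.mp h5)

theorem y_x_even (i : ℤ) :
    sy * sx ^ (2 * i) = st ^ (2 * i) * sx ^ (-(2 * i)) * sy := by
  have hc : Commute (st ^ 2) (sx ^ 2)⁻¹ := (comm_x_sq.pow_left 2).inv_right
  have h : sy * (sx ^ 2) ^ i * sy⁻¹ = (st ^ 2) ^ i * ((sx ^ 2)⁻¹) ^ i := by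
    rw [← conj_zpow, conj_y_x_sq, hc.mul_zpow]
  have h' : sy * sx ^ (2 * i) * sy⁻¹ = st ^ (2 * i) * sx ^ (-(2 * i)) := by
    rw [zpow_mul, zpow_mul, zpow_neg, zpow_mul]
    rw [inv_zpow] at h
    exact h
  rw [← h']
  group

theorem y_x_odd (i : ℤ) :
    sy * sx ^ (2 * i + 1) = st ^ (2 * i + 1) * sx ^ (-(2 * i + 1)) * sy⁻¹ := by
  have hc : Commute st (sx ^ (-(2 * i))) := by
    have := comm_x_sq.zpow_right (-i)
    rw [← zpow_natCast, ← zpow_mul] at this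
    convert this using 2
    push_cast
    ring
  calc sy * sx ^ (2 * i + 1) = (sy * sx ^ (2 * i)) * sx := by group
    _ = st ^ (2 * i) * sx ^ (-(2 * i)) * (sy * sx) := by rw [y_x_even]; group
    _ = st ^ (2 * i) * (sx ^ (-(2 * i)) * st) * sx⁻¹ * sy⁻¹ := by rw [y_mul_x]; group
    _ = st ^ (2 * i) * (st * sx ^ (-(2 * i))) * sx⁻¹ * sy⁻¹ := by rw [hc.eq]
    _ = _ := by group

/-! ### Words and computation of normal forms -/

/-- The letters `x, x⁻¹, y, y⁻¹`. -/
inductive Letter : Type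
  | x | xi | y | yi

/-- The value of a letter in `S`. -/
def Letter.val : Letter → S
  | .x => sx
  | .xi => sx⁻¹
  | .y => sy
  | .yi => sy⁻¹

/-- Left multiplication by a letter, on normal forms `(k, p, q)`. -/
def step : Letter → ℤ × ℤ × ℤ → ℤ × ℤ × ℤ
  | .x, (k, p, q) => (-k, p + 1, q)
  | .xi, (k, p, q) => (-k, p - 1, q)
  | .y, (k, p, q) => (p - k, -p, if p % 2 = 0 then q + 1 else q - 1)
  | .yi, (k, p, q) => (-k - p, -p, if p % 2 = 0 then q - 1 else q + 1)

/-- The group element with a given normal form. -/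
def toS (s : ℤ × ℤ × ℤ) : S := st ^ s.1 * sx ^ s.2.1 * sy ^ s.2.2

theorem toS_step_x (s : ℤ × ℤ × ℤ) : toS (step .x s) = sx * toS s := by
  obtain ⟨k, p, q⟩ := s
  simp only [toS, step]
  rw [← mul_assoc, ← mul_assoc, x_st_zpow]
  group

theorem toS_step_y (s : ℤ × ℤ × ℤ) : toS (step .y s) = sy * toS s := by
  obtain ⟨k, p, q⟩ := s
  simp only [toS, step]
  rw [← mul_assoc, ← mul_assoc, y_st_zpow, mul_assoc (st ^ (-k)) sy]
  rcases Int.even_or_odd' p with ⟨i, rfl | rfl⟩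
  · rw [y_x_even, if_pos (by omega)]
    group
  · rw [y_x_odd, if_neg (by omega)]
    group

theorem step_x_xi (s : ℤ × ℤ × ℤ) : step .x (step .xi s) = s := by
  obtain ⟨k, p, q⟩ := s
  simp [step]

theorem step_xi_x (s : ℤ × ℤ × ℤ) : step .xi (step .x s) = s := by
  obtain ⟨k, p, q⟩ := s
  simp [step]

theorem step_y_yi (s : ℤ × ℤ × ℤ) : step .y (step .yi s) = s := by
  obtain ⟨k, p, q⟩ := s
  simp only [step, Prod.mk.injEq]
  refine ⟨by ring, by ring, ?_⟩
  split_ifs <;> omega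

theorem step_yi_y (s : ℤ × ℤ × ℤ) : step .yi (step .y s) = s := by
  obtain ⟨k, p, q⟩ := s
  simp only [step, Prod.mk.injEq]
  refine ⟨by ring, by ring, ?_⟩
  split_ifs <;> omega

theorem toS_step (l : Letter) (s : ℤ × ℤ × ℤ) : toS (step l s) = l.val * toS s := by
  cases l with
  | x => exact toS_step_x s
  | y => exact toS_step_y s
  | xi =>
    rw [Letter.val, eq_inv_mul_iff_mul_eq, ← toS_step_x, step_x_xi]
  | yi =>
    rw [Letter.val, eq_inv_mul_iff_mul_eq, ← toS_step_y, step_y_yi]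

/-- The value of a word in `S`. -/
def wval : List Letter → S
  | [] => 1
  | l :: w => l.val * wval w

/-- The normal form of a word. -/
def nf : List Letter → ℤ × ℤ × ℤ
  | [] => (0, 0, 0)
  | l :: w => step l (nf w)

theorem toS_nf (w : List Letter) : toS (nf w) = wval w := by
  induction w with
  | nil => simp [nf, wval, toS]
  | cons l w ih => rw [nf, toS_step, ih, wval]

theorem wval_append (v w : List Letter) : wval (v ++ w) = wval v * wval w := by
  induction v with
  | nil => simp [wval]
  | cons l v ih => simp [wval, ih, mul_assoc]

/-- Inverse of a letter. -/
def Letter.inv : Letter → Letter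
  | .x => .xi
  | .xi => .x
  | .y => .yi
  | .yi => .y

/-- The action of `φ` on letters. -/
def Letter.rot : Letter → Letter
  | .x => .y
  | .xi => .yi
  | .y => .xi
  | .yi => .x

/-- The word of `φ(w)⁻¹`. -/
def dual : List Letter → List Letter
  | [] => []
  | l :: w => dual w ++ [l.rot.inv]

/-! ### The automorphism -/

/-- The endomorphism `x ↦ y, y ↦ x⁻¹`. -/
def phiHom : S →* S :=
  PresentedGroup.toGroup (rels := Srels) (f := ![sy, sx⁻¹]) (by
    intro r hr
    have h1 := rel_one
    have h2 := rel_two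
    rcases hr with rfl | rfl
    · simp only [map_mul, map_pow, map_inv, FreeGroup.lift_apply_of, Matrix.cons_val_zero,
        Matrix.cons_val_one, inv_inv]
      rw [mul_eq_one_iff_eq_inv] at h2 ⊢
      rw [h2, inv_inv]
    · simp only [map_mul, map_pow, map_inv, FreeGroup.lift_apply_of, Matrix.cons_val_zero,
        Matrix.cons_val_one, inv_inv]
      have h3 : (sx⁻¹ * sy) ^ 2 * (sx⁻¹ * sy⁻¹) ^ 2
          = sx⁻¹ * ((sx * sy) ^ 2 * (sx * sy⁻¹) ^ 2)⁻¹ * sx := by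
        simp [pow_two, mul_assoc]
      rw [h3, h1]
      group)

theorem phiHom_x : phiHom sx = sy := by
  simp [phiHom, sx]

theorem phiHom_y : phiHom sy = sx⁻¹ := by
  simp [phiHom, sy]

theorem phiHom_four : ((phiHom.comp phiHom).comp (phiHom.comp phiHom)) = MonoidHom.id S := by
  apply PresentedGroup.ext
  intro i
  have hx := phiHom_x
  have hy := phiHom_y
  fin_cases i
  · change phiHom (phiHom (phiHom (phiHom sx))) = sx
    simp [hx, hy]
  · change phiHom (phiHom (phiHom (phiHom sy))) = sy
    simp [hx, hy]

/-- The automorphism `φ`. -/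
def phi : MulAut S :=
  MonoidHom.toMulEquiv phiHom (phiHom.comp (phiHom.comp phiHom)) phiHom_four phiHom_four

theorem phi_apply (g : S) : phi g = phiHom g := rfl

theorem phi_letter (l : Letter) : phi l.val = l.rot.val := by
  cases l <;> simp [Letter.val, Letter.rot, phi_apply, phiHom_x, phiHom_y]

theorem inv_letter (l : Letter) : l.inv.val = l.val⁻¹ := by
  cases l <;> simp [Letter.val, Letter.inv]

theorem wval_dual (w : List Letter) : wval (dual w) = (phi (wval w))⁻¹ := by
  induction w with
  | nil => simp [dual, wval]
  | cons l w ih => simp [dual, wval, wval_append, ih, inv_letter, phi_letter]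

/-! ### The action on normal forms, which separates elements -/

/-- The permutation of normal forms given by `x`. -/
def permX : Equiv.Perm (ℤ × ℤ × ℤ) := ⟨step .x, step .xi, step_xi_x, step_x_xi⟩

/-- The permutation of normal forms given by `y`. -/
def permY : Equiv.Perm (ℤ × ℤ × ℤ) := ⟨step .y, step .yi, step_yi_y, step_y_yi⟩

theorem perm_rel_one : (permX * permY) ^ 2 * (permX * permY⁻¹) ^ 2 = 1 := by
  apply Equiv.ext
  rintro ⟨k, p, q⟩
  change step .x (step .y (step .x (step .y (step .x (step .yi (step .x (step .yi
    (k, p, q)))))))) = (k, p, q)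
  simp only [step, Prod.mk.injEq]
  refine ⟨by ring, by ring, ?_⟩
  split_ifs <;> omega

theorem perm_rel_two : (permY * permX) ^ 2 * (permY * permX⁻¹) ^ 2 = 1 := by
  apply Equiv.ext
  rintro ⟨k, p, q⟩
  change step .y (step .x (step .y (step .x (step .y (step .xi (step .y (step .xi
    (k, p, q)))))))) = (k, p, q)
  simp only [step, Prod.mk.injEq]
  refine ⟨by ring, by ring, ?_⟩
  split_ifs <;> omega

/-- The action of `S` on normal forms. -/
def act : S →* Equiv.Perm (ℤ × ℤ × ℤ) :=
  PresentedGroup.toGroup (rels := Srels) (f := ![permX, permY]) (by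
    intro r hr
    rcases hr with rfl | rfl
    · simpa using perm_rel_one
    · simpa using perm_rel_two)

theorem act_x : act sx = permX := by
  simp [act, sx]

theorem act_y : act sy = permY := by
  simp [act, sy]

theorem act_letter (l : Letter) (s : ℤ × ℤ × ℤ) : act l.val s = step l s := by
  cases l with
  | x => rw [Letter.val, act_x]; rfl
  | y => rw [Letter.val, act_y]; rfl
  | xi => rw [Letter.val, map_inv, act_x]; rfl
  | yi => rw [Letter.val, map_inv, act_y]; rfl

theorem act_wval (w : List Letter) : act (wval w) (0, 0, 0) = nf w := by
  induction w with
  | nil => simp [wval, nf]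
  | cons l w ih => rw [wval, map_mul, Equiv.Perm.mul_apply, ih, act_letter, nf]

theorem sx_ne_inv : sx ≠ sx⁻¹ := by
  intro h
  have h1 := congrArg (fun g => act g (0, 0, 0)) h
  have h2 := act_letter .x (0, 0, 0)
  have h3 := act_letter .xi (0, 0, 0)
  simp only [Letter.val] at h1 h2 h3
  rw [h2, h3] at h1
  simp [step] at h1

theorem orderOf_phi : orderOf phi = 4 := by
  have h : orderOf phi = 2 ^ (1 + 1) := by
    apply orderOf_eq_prime_pow
    · intro h
      have h1 : phi (phi sx) = sx := by
        have := DFunLike.congr_fun h sx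
        simpa [pow_two] using this
      simp only [phi_apply, phiHom_x, phiHom_y] at h1
      exact sx_ne_inv h1.symm
    · apply MulEquiv.ext
      intro g
      exact DFunLike.congr_fun phiHom_four g
  simpa using h

/-! ### Sums over lists in characteristic two -/

/-- Add an element to a list, cancelling it against an equal one. -/
def toggle (a : ℤ × ℤ × ℤ) : List (ℤ × ℤ × ℤ) → List (ℤ × ℤ × ℤ)
  | [] => [a]
  | b :: l => if a = b then l else b :: toggle a l

/-- Cancel equal elements of a list in pairs. -/
def cancel : List (ℤ × ℤ × ℤ) → List (ℤ × ℤ × ℤ)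
  | [] => []
  | a :: l => toggle a (cancel l)

/-- The sum in the group ring of the elements with given normal forms. -/
def nsum (l : List (ℤ × ℤ × ℤ)) : MonoidAlgebra (ZMod 2) S := (l.map fun s => Gs (toS s)).sum

/-- The sum in the group ring of a list of words. -/
def wsum (l : List (List Letter)) : MonoidAlgebra (ZMod 2) S := (l.map fun w => Gs (wval w)).sum

theorem add_self_ring (u : MonoidAlgebra (ZMod 2) S) : u + u = 0 := by
  rw [← two_smul (ZMod 2) u, show (2 : ZMod 2) = 0 from rfl, zero_smul]

theorem nsum_toggle (a : ℤ × ℤ × ℤ) (l : List (ℤ × ℤ × ℤ)) :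
    nsum (toggle a l) = Gs (toS a) + nsum l := by
  induction l with
  | nil => simp [toggle, nsum]
  | cons b l ih =>
    rw [toggle]
    split_ifs with h
    · subst h
      simp only [nsum, List.map_cons, List.sum_cons]
      rw [← add_assoc, add_self_ring, zero_add]
    · simp only [nsum, List.map_cons, List.sum_cons] at ih ⊢
      rw [ih, add_left_comm]

theorem nsum_cancel (l : List (ℤ × ℤ × ℤ)) : nsum (cancel l) = nsum l := by
  induction l with
  | nil => rfl
  | cons a l ih =>
    rw [cancel, nsum_toggle, ih]
    simp [nsum]

/-- All products of words from two lists. -/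
def prods : List (List Letter) → List (List Letter) → List (List Letter)
  | [], _ => []
  | v :: l, m => m.map (fun w => v ++ w) ++ prods l m

theorem Gs_mul (g h : S) : Gs (g * h) = Gs g * Gs h := by
  simp [Gs]

theorem wsum_prods (l m : List (List Letter)) : wsum (prods l m) = wsum l * wsum m := by
  induction l with
  | nil => simp [prods, wsum]
  | cons v l ih =>
    have h : wsum (m.map fun w => v ++ w) = Gs (wval v) * wsum m := by
      simp only [wsum, List.map_map]
      rw [← List.sum_map_mul_left]
      congr 1
      apply List.map_congr_left
      intro w _
      simp [wval_append, Gs_mul]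
    have h2 : wsum (prods (v :: l) m) = wsum (m.map fun w => v ++ w) + wsum (prods l m) := by
      simp [prods, wsum]
    rw [h2, h, ih]
    simp [wsum, add_mul]

theorem wsum_eq_one (l : List (List Letter)) (h : cancel (l.map nf) = [(0, 0, 0)]) :
    wsum l = 1 := by
  have h1 : wsum l = nsum (l.map nf) := by
    simp only [wsum, nsum, List.map_map]
    congr 1
    apply List.map_congr_left
    intro w _
    simp [toS_nf]
  rw [h1, ← nsum_cancel, h]
  simp [nsum, toS, Gs, MonoidAlgebra.one_def]

/-- The words of `ν`. -/
def nuWords : List (List Letter) :=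
  [[.x],
   [.xi],
   [.y],
   [.yi],
   [.x, .y],
   [.xi, .yi],
   [.y, .xi],
   [.y, .y],
   [.yi, .x],
   [.yi, .yi],
   [.x, .x, .y],
   [.x, .yi, .x],
   [.x, .yi, .yi],
   [.xi, .xi, .yi],
   [.xi, .y, .xi],
   [.xi, .y, .y],
   [.y, .x, .y],
   [.yi, .xi, .yi],
   [.x, .x, .yi, .x],
   [.x, .y, .x, .x],
   [.xi, .xi, .y, .xi],
   [.xi, .yi, .xi, .xi],
   [.y, .xi, .xi, .yi],
   [.yi, .x, .x, .y],
   [.x, .x, .y, .x, .x],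
   [.x, .yi, .x, .x, .y],
   [.xi, .xi, .yi, .xi, .xi],
   [.xi, .y, .xi, .xi, .yi],
   [.x, .x, .yi, .x, .x, .y]]

theorem nu_eq : ν = wsum nuWords := by
  simp only [ν, wsum, nuWords, List.map_cons, List.map_nil, List.sum_cons, List.sum_nil, wval,
    Letter.val, pow_two, mul_one, mul_assoc, add_assoc, add_zero]

theorem cancel_left : cancel ((prods nuWords (nuWords.map dual)).map nf) = [(0, 0, 0)] := by
  decide +kernel

theorem cancel_right : cancel ((prods (nuWords.map dual) nuWords).map nf) = [(0, 0, 0)] := by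
  decide +kernel

/-! ### The anti-involution -/

/-- The map `g ↦ g⁻¹` into the opposite of the group ring. -/
def starAux : S →* (MonoidAlgebra (ZMod 2) S)ᵐᵒᵖ where
  toFun g := MulOpposite.op (Gs g⁻¹)
  map_one' := by simp [Gs, MonoidAlgebra.one_def]
  map_mul' g h := by rw [mul_inv_rev, Gs_mul, MulOpposite.op_mul]

/-- The anti-involution `*`. -/
def starMap : MonoidAlgebra (ZMod 2) S →ₗ[ZMod 2] MonoidAlgebra (ZMod 2) S :=
  (MulOpposite.opLinearEquiv (ZMod 2)).symm.toLinearMap ∘ₗ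
    (MonoidAlgebra.lift (ZMod 2) (MonoidAlgebra (ZMod 2) S)ᵐᵒᵖ S starAux).toLinearMap

theorem starMap_apply (u : MonoidAlgebra (ZMod 2) S) : starMap u = MulOpposite.unop
    (MonoidAlgebra.lift (ZMod 2) (MonoidAlgebra (ZMod 2) S)ᵐᵒᵖ S starAux u) := rfl

theorem starMap_single (g : S) (r : ZMod 2) :
    starMap (MonoidAlgebra.single g r) = MonoidAlgebra.single g⁻¹ r := by
  rw [starMap_apply, MonoidAlgebra.lift_single]
  simp [starAux, Gs]

theorem starMap_mul (u v : MonoidAlgebra (ZMod 2) S) :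
    starMap (u * v) = starMap v * starMap u := by
  simp only [starMap_apply, map_mul, MulOpposite.unop_mul]

theorem star_phi_Gs (g : S) :
    starMap (MonoidAlgebra.domCongr (ZMod 2) (ZMod 2) phi (Gs g)) = Gs (phi g)⁻¹ := by
  simp only [Gs, MonoidAlgebra.of_apply, MonoidAlgebra.domCongr_single, starMap_single]

theorem star_phi_wsum (l : List (List Letter)) :
    starMap (MonoidAlgebra.domCongr (ZMod 2) (ZMod 2) phi (wsum l)) = wsum (l.map dual) := by
  induction l with
  | nil => simp [wsum]
  | cons w l ih =>
    simp only [wsum, List.map_cons, List.sum_cons, map_add] at ih ⊢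
    rw [ih, star_phi_Gs, wval_dual]

/-! ### Non-triviality -/

theorem coeff_wsum (l : List (List Letter)) (a : ℤ × ℤ × ℤ) :
    (MonoidAlgebra.mapDomain (fun g : S => act g (0, 0, 0)) (wsum l)).coeff a
      = (l.map fun w => if nf w = a then (1 : ZMod 2) else 0).sum := by
  induction l with
  | nil => simp [wsum]
  | cons w l ih =>
    have h : wsum (w :: l) = Gs (wval w) + wsum l := by simp [wsum]
    rw [h, MonoidAlgebra.mapDomain_add, MonoidAlgebra.coeff_add, Finsupp.add_apply, ih,
      List.map_cons, List.sum_cons, Gs, MonoidAlgebra.of_apply, MonoidAlgebra.mapDomain_single,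
      act_wval, MonoidAlgebra.coeff_single, Finsupp.single_apply]

theorem nu_nontrivial : ¬∃ (c : (ZMod 2)ˣ) (g : S), ν = MonoidAlgebra.single g (c : ZMod 2) := by
  rintro ⟨c, g, h⟩
  rw [nu_eq] at h
  have h1 := coeff_wsum nuWords (0, 1, 0)
  have h2 := coeff_wsum nuWords (0, -1, 0)
  have e1 : (nuWords.map fun w => if nf w = (0, 1, 0) then (1 : ZMod 2) else 0).sum = 1 := by
    decide +kernel
  have e2 : (nuWords.map fun w => if nf w = (0, -1, 0) then (1 : ZMod 2) else 0).sum = 1 := by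
    decide +kernel
  rw [e1, h, MonoidAlgebra.mapDomain_single, MonoidAlgebra.coeff_single,
    Finsupp.single_apply] at h1
  rw [e2, h, MonoidAlgebra.mapDomain_single, MonoidAlgebra.coeff_single,
    Finsupp.single_apply] at h2
  split_ifs at h1 with h3
  · split_ifs at h2 with h4
    · rw [h3] at h4
      simp at h4
    · exact zero_ne_one h2
  · exact zero_ne_one h1

/-- The assignment `x ↦ y, y ↦ x⁻¹` extends to an automorphism `φ` of `S` of order 4,
and `ν` is a unit of `F₂[S]` with inverse `φ(ν)*`, where `*` is the `F₂`-linear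
anti-involution of `F₂[S]` extending `g ↦ g⁻¹`; in particular `ν` is a non-trivial unit. -/
theorem nu_phi_unitary :
    ∃ φ : MulAut S, φ sx = sy ∧ φ sy = sx⁻¹ ∧ orderOf φ = 4 ∧
    ∃ star : MonoidAlgebra (ZMod 2) S →ₗ[ZMod 2] MonoidAlgebra (ZMod 2) S,
      (∀ (g : S) (r : ZMod 2), star (MonoidAlgebra.single g r) = MonoidAlgebra.single g⁻¹ r) ∧
      (∀ u v : MonoidAlgebra (ZMod 2) S, star (u * v) = star v * star u) ∧
      ν * star (MonoidAlgebra.domCongr (ZMod 2) (ZMod 2) φ ν) = 1 ∧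
      star (MonoidAlgebra.domCongr (ZMod 2) (ZMod 2) φ ν) * ν = 1 ∧
      ¬∃ (c : (ZMod 2)ˣ) (g : S), ν = MonoidAlgebra.single g (c : ZMod 2) := by
  refine ⟨phi, phiHom_x, phiHom_y, orderOf_phi, starMap, starMap_single, starMap_mul, ?_, ?_,
    nu_nontrivial⟩
  · rw [nu_eq, star_phi_wsum, ← wsum_prods]
    exact wsum_eq_one _ cancel_left
  · rw [nu_eq, star_phi_wsum, ← wsum_prods]
    exact wsum_eq_one _ cancel_right
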